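/- arXiv:0903.1436 — 2 statements merged into one kernel-verified Lean document; each statement's English description precedes it below -/
import Mathlib

section
/- Let n ≥ 1 and let m be a positive integer with m > (n+2)/4. Then there exists a constant C = C(m,n) > 0 such that for every Schwartz function u on ℝ^{n+1} and every parabolic cube Q of radius 2 in ℝ^{n+1}, |u_Q| ≤ C (1 + ‖u‖_{BMOₚ(ℝ^{n+1})} (1 + log⁺ ‖u‖_{W₂^{2m,m}(ℝ^{n+1})})). -/
open MeasureTheory Real
open scoped FourierTransform ENNReal

noncomputable section

/-- The model space for `ℝ^{n+1}`: generic point `z = (x, t)` where the spatial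
coordinates are `x i = z i.castSucc` (`i : Fin n`) and the time coordinate is
`t = z (Fin.last n)`. -/
abbrev PSpace (n : ℕ) := EuclideanSpace ℝ (Fin (n + 1))

/-- The parabolic distance `‖z‖ₚ = max (maxᵢ |xᵢ|) √|t|` from `z` to the origin. -/
def pnorm {n : ℕ} (z : PSpace n) : ℝ :=
  max (⨆ i : Fin n, |z i.castSucc|) (Real.sqrt |z (Fin.last n)|)

/-- The parabolic cube of radius `r` centered at `z₀`. -/
def pCube {n : ℕ} (z₀ : PSpace n) (r : ℝ) : Set (PSpace n) :=
  {z | pnorm (z - z₀) < r}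

/-- The set of mean oscillations `⨍_Q |u - u_Q|` of `u` over parabolic cubes `Q ⊆ O`. -/
def oscSet {n : ℕ} (O : Set (PSpace n)) (u : PSpace n → ℝ) : Set ℝ :=
  {v | ∃ z₀ r, 0 < r ∧ pCube z₀ r ⊆ O ∧
    v = ⨍ z in pCube z₀ r, |u z - ⨍ w in pCube z₀ r, u w|}

/-- The parabolic BMO norm of `u` over `O`. -/
def pBMO {n : ℕ} (O : Set (PSpace n)) (u : PSpace n → ℝ) : ℝ := sSup (oscSet O u)

/-- The set of quantities `inf_c ⨍_Q |u - c|` over parabolic cubes `Q ⊆ O`. -/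
def infOscSet {n : ℕ} (O : Set (PSpace n)) (u : PSpace n → ℝ) : Set ℝ :=
  {v | ∃ z₀ r, 0 < r ∧ pCube z₀ r ⊆ O ∧
    v = ⨅ c : ℝ, ⨍ z in pCube z₀ r, |u z - c|}

/-- Time derivative `D_t u`. -/
def Dt {n : ℕ} (u : PSpace n → ℝ) : PSpace n → ℝ :=
  fun z => fderiv ℝ u z (EuclideanSpace.single (Fin.last n) 1)

/-- Spatial derivative in direction `i`. -/
def Dx {n : ℕ} (i : Fin n) (u : PSpace n → ℝ) : PSpace n → ℝ :=
  fun z => fderiv ℝ u z (EuclideanSpace.single i.castSucc 1)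

/-- Spatial derivative `D_x^α` for a multi-index `α`. -/
def DxPow {n : ℕ} (α : Fin n → ℕ) (u : PSpace n → ℝ) : PSpace n → ℝ :=
  (List.finRange n).foldr (fun i v => (Dx i)^[α i] v) u

/-- The mixed derivative `D_t^r D_x^α u`. -/
def mixDeriv {n : ℕ} (r : ℕ) (α : Fin n → ℕ) (u : PSpace n → ℝ) : PSpace n → ℝ :=
  Dt^[r] (DxPow α u)

/-- The `L²(O)` norm. -/
def L2norm {n : ℕ} (O : Set (PSpace n)) (v : PSpace n → ℝ) : ℝ :=
  (eLpNorm v 2 (volume.restrict O)).toReal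

/-- The parabolic Sobolev norm `‖u‖_{W₂^{2m,m}(O)} = Σ_{2r+s ≤ 2m} Σ_{|α| = s}
‖D_t^r D_x^α u‖_{L²(O)}`. -/
def sobNorm {n : ℕ} (m : ℕ) (O : Set (PSpace n)) (u : PSpace n → ℝ) : ℝ :=
  ∑ p ∈ (Finset.range (2 * m + 1) ×ˢ Finset.range (2 * m + 1)).filter
      (fun p => 2 * p.1 + p.2 ≤ 2 * m),
    ∑ α ∈ Finset.Nat.antidiagonalTuple n p.2, L2norm O (mixDeriv p.1 α u)

/-- `log⁺ x = max (log x) 0`. -/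
def logPlus (x : ℝ) : ℝ := max (Real.log x) 0

/-- The domain `Ω_T = (0,1)ⁿ × (0,T)`. -/
def OmegaT (n : ℕ) (T : ℝ) : Set (PSpace n) :=
  {z | (∀ i : Fin n, z i.castSucc ∈ Set.Ioo (0 : ℝ) 1) ∧ z (Fin.last n) ∈ Set.Ioo 0 T}

/-- The anisotropic dilation `η^a z = (η x, η² t)` with `a = (1,…,1,2)`. -/
def pdil {n : ℕ} (η : ℝ) (z : PSpace n) : PSpace n :=
  (EuclideanSpace.equiv (Fin (n + 1)) ℝ).symm
    (fun i => if i = Fin.last n then η ^ 2 * z i else η * z i)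

/-- The anisotropic dyadic partition of unity `ψ_j` built from `ψ₀`:
`ψ_j z = ψ₀ (2^{-ja} z) - ψ₀ (2^{-(j-1)a} z)` for `j ≥ 1`. -/
def psiJ {n : ℕ} (ψ₀ : PSpace n → ℝ) : ℕ → PSpace n → ℝ
  | 0 => ψ₀
  | (j + 1) => fun z =>
      ψ₀ (pdil ((2 : ℝ) ^ (-((j : ℝ) + 1))) z) - ψ₀ (pdil ((2 : ℝ) ^ (-(j : ℝ))) z)

/-- `φ_j = 𝓕⁻¹ ψ_j`, the inverse Fourier transform of `ψ_j`. -/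
def phiJ {n : ℕ} (ψ₀ : PSpace n → ℝ) (j : ℕ) : PSpace n → ℂ :=
  𝓕⁻ (fun z => ((psiJ ψ₀ j z : ℝ) : ℂ))

/-- The convolution `(φ * u) z = ∫ φ (z - w) u w dw`. -/
def pconv {n : ℕ} (φ : PSpace n → ℂ) (u : PSpace n → ℝ) (z : PSpace n) : ℂ :=
  ∫ w, φ (z - w) * (u w : ℂ)

/-- The truncated Lizorkin–Triebel norm `‖u‖_{F̃⁰_{∞,1}} = ‖Σ_{j≥1} |φ_j * u|‖_∞`. -/
def F01norm {n : ℕ} (ψ₀ : PSpace n → ℝ) (u : PSpace n → ℝ) : ℝ :=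
  ⨆ z, ∑' j : ℕ, ‖pconv (phiJ ψ₀ (j + 1)) u z‖

/-- The truncated Lizorkin–Triebel norm `‖u‖_{F̃⁰_{∞,2}} = ‖(Σ_{j≥1} |φ_j * u|²)^{1/2}‖_∞`. -/
def F02norm {n : ℕ} (ψ₀ : PSpace n → ℝ) (u : PSpace n → ℝ) : ℝ :=
  ⨆ z, Real.sqrt (∑' j : ℕ, ‖pconv (phiJ ψ₀ (j + 1)) u z‖ ^ 2)

/-- The Lizorkin–Triebel norm `‖u‖_{F^γ_{∞,2}} = ‖(Σ_{j≥0} 2^{2γj} |φ_j * u|²)^{1/2}‖_∞`. -/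
def Fg2norm {n : ℕ} (ψ₀ : PSpace n → ℝ) (γ : ℝ) (u : PSpace n → ℝ) : ℝ :=
  ⨆ z, Real.sqrt (∑' j : ℕ, (2 : ℝ) ^ (2 * γ * j) * ‖pconv (phiJ ψ₀ j) u z‖ ^ 2)

/-- The anisotropic Besov quasi-norm `‖u‖_{B^s_{p,q}}`. -/
def besovNorm {n : ℕ} (ψ₀ : PSpace n → ℝ) (s : ℝ) (p q : ℝ≥0∞) (u : PSpace n → ℝ) : ℝ :=
  if q = ∞ then ⨆ j : ℕ, (2 : ℝ) ^ (s * j) * (eLpNorm (pconv (phiJ ψ₀ j) u) p volume).toReal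
  else (∑' j : ℕ, ((2 : ℝ) ^ (s * j) *
    (eLpNorm (pconv (phiJ ψ₀ j) u) p volume).toReal) ^ q.toReal) ^ (1 / q.toReal)

/-- The standing hypotheses on the cut-off function `ψ₀`: smooth, compactly supported,
equal to `1` on `{‖z‖ₚ ≤ 1}` and to `0` on `{‖z‖ₚ ≥ 2}`. -/
structure IsCutoff {n : ℕ} (ψ₀ : PSpace n → ℝ) : Prop where
  smooth : ContDiff ℝ (⊤ : ℕ∞) ψ₀
  compact_support : HasCompactSupport ψ₀
  eq_one : ∀ z, pnorm z ≤ 1 → ψ₀ z = 1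
  eq_zero : ∀ z, 2 ≤ pnorm z → ψ₀ z = 0

lemma mem_pCube_iff {n : ℕ} (hn : 1 ≤ n) (z₀ z : PSpace n) {r : ℝ} (hr : 0 < r) :
    z ∈ pCube z₀ r ↔ ∀ i, |z i - z₀ i| < if i = Fin.last n then r ^ 2 else r := by
  have : Nonempty (Fin n) := ⟨⟨0, hn⟩⟩
  have h1 : (⨆ i : Fin n, |(z - z₀) i.castSucc|) < r ↔ ∀ i : Fin n, |(z - z₀) i.castSucc| < r := by
    constructor
    · intro h i
      exact lt_of_le_of_lt (le_ciSup (f := fun i : Fin n => |(z - z₀) i.castSucc|)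
        (Set.finite_range _).bddAbove i) h
    · intro h
      obtain ⟨i, hi⟩ := exists_eq_ciSup_of_finite (f := fun i : Fin n => |(z - z₀) i.castSucc|)
      rw [← hi]; exact h i
  have h2 : Real.sqrt |(z - z₀) (Fin.last n)| < r ↔ |(z - z₀) (Fin.last n)| < r ^ 2 :=
    Real.sqrt_lt' hr
  show pnorm (z - z₀) < r ↔ _
  unfold pnorm
  rw [max_lt_iff, h1, h2, Fin.forall_fin_succ']
  simp [Fin.castSucc_ne_last]

lemma pCube_eq {n : ℕ} (hn : 1 ≤ n) (z₀ : PSpace n) {r : ℝ} (hr : 0 < r) :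
    pCube z₀ r = (MeasurableEquiv.toLp 2 (Fin (n + 1) → ℝ)).symm ⁻¹'
      (Set.univ.pi fun i => Set.Ioo (z₀ i - if i = Fin.last n then r ^ 2 else r)
        (z₀ i + if i = Fin.last n then r ^ 2 else r)) := by
  ext z
  rw [mem_pCube_iff hn z₀ z hr]
  simp only [Set.mem_preimage, Set.mem_univ_pi, Set.mem_Ioo]
  refine forall_congr' fun i => ?_
  rw [abs_lt]
  show _ ↔ _ < z i ∧ z i < _
  constructor <;> rintro ⟨h1, h2⟩ <;> constructor <;> linarith

lemma pCube_meas {n : ℕ} (hn : 1 ≤ n) (z₀ : PSpace n) {r : ℝ} (hr : 0 < r) :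
    MeasurableSet (pCube z₀ r) := by
  rw [pCube_eq hn z₀ hr]
  exact (MeasurableEquiv.measurable _) (MeasurableSet.univ_pi fun i => measurableSet_Ioo)

lemma pCube_volume {n : ℕ} (hn : 1 ≤ n) (z₀ : PSpace n) {r : ℝ} (hr : 0 < r) :
    volume (pCube z₀ r) = ENNReal.ofReal (2 ^ (n + 1) * r ^ (n + 2)) := by
  rw [pCube_eq hn z₀ hr, (EuclideanSpace.volume_preserving_symm_measurableEquiv_toLp
    (Fin (n + 1))).measure_preimage_equiv, Real.volume_pi_Ioo,
    ← ENNReal.ofReal_prod_of_nonneg]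
  · congr 1
    rw [Fin.prod_univ_castSucc]
    simp [Fin.castSucc_ne_last]
    ring
  · intro i _
    split_ifs <;> nlinarith [sq_nonneg r]

lemma pCube_real {n : ℕ} (hn : 1 ≤ n) (z₀ : PSpace n) {r : ℝ} (hr : 0 < r) :
    volume.real (pCube z₀ r) = 2 ^ (n + 1) * r ^ (n + 2) := by
  rw [Measure.real, pCube_volume hn z₀ hr, ENNReal.toReal_ofReal (by positivity)]

lemma pCube_mono {n : ℕ} (hn : 1 ≤ n) (z₀ : PSpace n) {r : ℝ} (hr : 0 < r) :
    pCube z₀ r ⊆ pCube z₀ (2 * r) := by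
  intro z hz
  have : pnorm (z - z₀) < r := hz
  show pnorm (z - z₀) < 2 * r
  linarith

lemma osc_bdd {n : ℕ} (hn : 1 ≤ n) (u : SchwartzMap (PSpace n) ℝ) :
    BddAbove (oscSet Set.univ ⇑u) := by
  obtain ⟨M, hM⟩ : ∃ M, ∀ z, |u z| ≤ M := by
    obtain ⟨M, -, hM⟩ := u.decay 0 0
    exact ⟨M, fun z => by simpa using hM z⟩
  have key : ∀ (z₀ : PSpace n) (r K : ℝ), 0 < r → ∀ f : PSpace n → ℝ, (∀ z, |f z| ≤ K) →
      |⨍ z in pCube z₀ r, f z| ≤ K := by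
    intro z₀ r K hr f hf
    have hv := pCube_real hn z₀ hr
    have hp : 0 < volume.real (pCube z₀ r) := by rw [hv]; positivity
    have h := norm_setIntegral_le_of_norm_le_const (μ := volume) (s := pCube z₀ r) (f := f) (C := K)
      (by rw [pCube_volume hn z₀ hr]; exact ENNReal.ofReal_lt_top) (fun z _ => hf z)
    rw [setAverage_eq, smul_eq_mul, abs_mul, abs_inv, abs_of_pos hp, inv_mul_le_iff₀ hp, mul_comm]
    exact h
  refine ⟨M + M, ?_⟩
  rintro v ⟨z₀, r, hr, -, rfl⟩
  refine le_trans (le_abs_self _) (key z₀ r _ hr _ fun z => ?_)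
  rw [abs_abs]
  exact (abs_sub _ _).trans (add_le_add (hM z) (key z₀ r M hr _ hM))

lemma u_intOn {n : ℕ} (u : SchwartzMap (PSpace n) ℝ) (s : Set (PSpace n)) :
    IntegrableOn (⇑u) s := u.integrable.integrableOn

lemma step {n : ℕ} (hn : 1 ≤ n) (u : SchwartzMap (PSpace n) ℝ) (z₀ : PSpace n) {r : ℝ}
    (hr : 0 < r) :
    |(⨍ z in pCube z₀ r, u z) - ⨍ z in pCube z₀ (2 * r), u z| ≤
      2 ^ (n + 2) * pBMO Set.univ ⇑u := by
  set c := ⨍ z in pCube z₀ (2 * r), u z with hc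
  have hr2 : 0 < 2 * r := by positivity
  have hv := pCube_real hn z₀ hr
  have hv2 := pCube_real hn z₀ hr2
  have hp : 0 < volume.real (pCube z₀ r) := by rw [hv]; positivity
  have hp2 : 0 < volume.real (pCube z₀ (2 * r)) := by rw [hv2]; positivity
  have hfin : volume (pCube z₀ r) ≠ ∞ := by rw [pCube_volume hn z₀ hr]; exact ENNReal.ofReal_ne_top
  have hfin2 : volume (pCube z₀ (2 * r)) ≠ ∞ := by
    rw [pCube_volume hn z₀ hr2]; exact ENNReal.ofReal_ne_top
  have hI2 : IntegrableOn (fun z => u z - c) (pCube z₀ (2 * r)) :=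
    (u_intOn u _).sub (integrableOn_const hfin2)
  have hB : ⨍ z in pCube z₀ (2 * r), |u z - c| ≤ pBMO Set.univ ⇑u :=
    le_csSup (osc_bdd hn u) ⟨z₀, 2 * r, hr2, Set.subset_univ _, rfl⟩
  have e1 : (⨍ z in pCube z₀ r, u z) - c =
      (volume.real (pCube z₀ r))⁻¹ * ∫ z in pCube z₀ r, (u z - c) := by
    rw [integral_sub (u_intOn u _) (integrableOn_const hfin), setAverage_eq, setIntegral_const,
      smul_eq_mul, smul_eq_mul]
    field_simp
  have h3 : |∫ z in pCube z₀ r, (u z - c)| ≤ ∫ z in pCube z₀ (2 * r), |u z - c| :=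
    (abs_integral_le_integral_abs).trans (setIntegral_mono_set hI2.abs
      (Filter.Eventually.of_forall fun z => abs_nonneg _) (pCube_mono hn z₀ hr).eventuallyLE)
  rw [setAverage_eq, smul_eq_mul, inv_mul_le_iff₀ hp2] at hB
  rw [e1, abs_mul, abs_inv, abs_of_pos hp, inv_mul_le_iff₀ hp]
  refine h3.trans (hB.trans (le_of_eq ?_))
  rw [hv, hv2, mul_pow]
  ring

lemma steps {n : ℕ} (hn : 1 ≤ n) (u : SchwartzMap (PSpace n) ℝ) (z₀ : PSpace n) (k : ℕ) :
    |(⨍ z in pCube z₀ 2, u z) - ⨍ z in pCube z₀ (2 ^ k * 2), u z| ≤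
      k * (2 ^ (n + 2) * pBMO Set.univ ⇑u) := by
  induction k with
  | zero => simp
  | succ k ih =>
    have h := step hn u z₀ (r := 2 ^ k * 2) (by positivity)
    have e : (2 : ℝ) ^ (k + 1) * 2 = 2 * (2 ^ k * 2) := by ring
    rw [e]
    push_cast
    have := abs_sub_le (⨍ z in pCube z₀ 2, u z) (⨍ z in pCube z₀ (2 ^ k * 2), u z)
      (⨍ z in pCube z₀ (2 * (2 ^ k * 2)), u z)
    linarith

lemma L2_le_sob {n : ℕ} (m : ℕ) (u : PSpace n → ℝ) :
    L2norm Set.univ u ≤ sobNorm m Set.univ u := by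
  have h0 : ∀ (α : Fin n → ℕ) r, 0 ≤ L2norm Set.univ (mixDeriv r α u) :=
    fun α r => ENNReal.toReal_nonneg
  have e : mixDeriv 0 (0 : Fin n → ℕ) u = u := by
    simp [mixDeriv, DxPow]
  unfold sobNorm
  refine le_trans ?_ (Finset.single_le_sum (f := fun p : ℕ × ℕ =>
    ∑ α ∈ Finset.Nat.antidiagonalTuple n p.2, L2norm Set.univ (mixDeriv p.1 α u))
    (fun p _ => Finset.sum_nonneg fun α _ => h0 α _) (a := ((0, 0) : ℕ × ℕ)) (by simp))
  simp [Finset.Nat.antidiagonalTuple_zero_right, e]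

lemma abs_setIntegral_le {X : Type*} [MeasurableSpace X] (μ : Measure X) (f : X → ℝ)
    (hf : MemLp f 2 μ) (s : Set X) (hfin : μ s ≠ ∞) :
    |∫ z in s, f z ∂μ| ≤ (eLpNorm f 2 μ).toReal * √(μ.real s) := by
  have hm : AEStronglyMeasurable f (μ.restrict s) := hf.aestronglyMeasurable.restrict
  have hL : eLpNorm f 2 μ ≠ ∞ := hf.eLpNorm_ne_top
  have h1 := eLpNorm_le_eLpNorm_mul_rpow_measure_univ (μ := μ.restrict s)
    (f := f) (p := 1) (q := 2) (by norm_num) hm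
  have hexp : (1 / (1 : ℝ≥0∞).toReal - 1 / (2 : ℝ≥0∞).toReal) = (1 / 2 : ℝ) := by norm_num
  rw [Measure.restrict_apply_univ, hexp] at h1
  have h2 : eLpNorm f 1 (μ.restrict s) ≤ eLpNorm f 2 μ * (μ s) ^ (1 / 2 : ℝ) :=
    h1.trans (mul_le_mul_left (eLpNorm_mono_measure _ Measure.restrict_le_self) _)
  have h3 : |∫ z in s, f z ∂μ| ≤ (eLpNorm f 1 (μ.restrict s)).toReal := by
    rw [eLpNorm_one_eq_lintegral_enorm, ← integral_norm_eq_lintegral_enorm hm]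
    exact norm_integral_le_integral_norm (μ := μ.restrict s) f
  have h4 := ENNReal.toReal_mono (ENNReal.mul_ne_top hL
    (ENNReal.rpow_ne_top_of_nonneg (by norm_num) hfin)) h2
  rw [ENNReal.toReal_mul, ← ENNReal.toReal_rpow, ← Real.sqrt_eq_rpow] at h4
  exact h3.trans h4

lemma mean_le_L2 {n : ℕ} (hn : 1 ≤ n) (u : SchwartzMap (PSpace n) ℝ) (z₀ : PSpace n) {r : ℝ}
    (hr : 0 < r) :
    |⨍ z in pCube z₀ r, u z| ≤
      (volume.real (pCube z₀ r))⁻¹ * (L2norm Set.univ ⇑u * √(volume.real (pCube z₀ r))) := by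
  have hv := pCube_real hn z₀ hr
  have hp : 0 < volume.real (pCube z₀ r) := by rw [hv]; positivity
  have hfin : volume (pCube z₀ r) ≠ ∞ := by rw [pCube_volume hn z₀ hr]; exact ENNReal.ofReal_ne_top
  rw [setAverage_eq, smul_eq_mul, abs_mul, abs_inv, abs_of_pos hp, L2norm, Measure.restrict_univ]
  exact mul_le_mul_of_nonneg_left (abs_setIntegral_le volume (⇑u) (u.memLp 2 volume) _ hfin)
    (inv_nonneg.2 hp.le)

lemma bmo_nonneg {n : ℕ} (u : PSpace n → ℝ) : 0 ≤ pBMO Set.univ u := by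
  refine Real.sSup_nonneg ?_
  rintro v ⟨z₀, r, hr, -, rfl⟩
  rw [setAverage_eq, smul_eq_mul]
  exact mul_nonneg (by positivity) (integral_nonneg fun z => abs_nonneg _)

/-- Estimate (2.26) of the mean of `u` over parabolic cubes of radius `2`:
`|u_Q| ≤ C (1 + ‖u‖_{BMOₚ} (1 + log⁺ ‖u‖_{W₂^{2m,m}}))`. -/
theorem mean_on_unit_cube_bound (n m : ℕ) (hn : 1 ≤ n) (hm : 0 < m)
    (hmn : ((n : ℝ) + 2) / 4 < m) :
    ∃ C : ℝ, 0 < C ∧ ∀ u : SchwartzMap (PSpace n) ℝ, ∀ z₀ : PSpace n,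
      |⨍ z in pCube z₀ 2, u z| ≤
        C * (1 + pBMO Set.univ ⇑u * (1 + logPlus (sobNorm m Set.univ ⇑u))) := by
  refine ⟨2 * 2 ^ (n + 2), by positivity, fun u z₀ => ?_⟩
  set W := sobNorm m Set.univ ⇑u with hW
  set B := pBMO Set.univ ⇑u with hB
  have hB0 : 0 ≤ B := bmo_nonneg _
  have hL : 0 ≤ logPlus W := le_max_right _ _
  have hlog2 : (1 : ℝ) / 2 < Real.log 2 := by linarith [Real.log_two_gt_d9]
  obtain ⟨k, hk1, hk2⟩ : ∃ k : ℕ, W ≤ 2 ^ k ∧ (k : ℝ) ≤ 2 * logPlus W + 1 := by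
    refine ⟨⌈2 * logPlus W⌉₊, ?_, (Nat.ceil_lt_add_one (by positivity)).le⟩
    have hc := Nat.le_ceil (2 * logPlus W)
    rcases le_or_gt W 0 with h | h
    · exact h.trans (by positivity)
    · rw [← Real.log_le_log_iff h (by positivity), Real.log_pow]
      have h1 : Real.log W ≤ logPlus W := le_max_left _ _
      nlinarith
  have hR : (0 : ℝ) < 2 ^ k * 2 := by positivity
  have h1 := steps hn u z₀ k
  have h2 := mean_le_L2 hn u z₀ hR
  have hv := pCube_real hn z₀ hR
  set V := volume.real (pCube z₀ (2 ^ k * 2)) with hV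
  have hp : 0 < V := by rw [hv]; positivity
  have h2k : (1 : ℝ) ≤ 2 ^ k := one_le_pow₀ (by norm_num)
  have hVk : ((2 : ℝ) ^ k) ^ 2 ≤ V := by
    rw [hv]
    have a1 : (1 : ℝ) ≤ 2 ^ (n + 1) := one_le_pow₀ (by norm_num)
    have a2 : ((2 : ℝ) ^ k) ^ 2 ≤ (2 ^ k * 2) ^ 2 := by gcongr; linarith
    have a3 : ((2 : ℝ) ^ k * 2) ^ 2 ≤ (2 ^ k * 2) ^ (n + 2) :=
      pow_le_pow_right₀ (by linarith) (by omega)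
    nlinarith
  have hs : (2 : ℝ) ^ k ≤ √V := Real.le_sqrt_of_sq_le hVk
  have hm1 : |⨍ z in pCube z₀ (2 ^ k * 2), u z| ≤ 1 := by
    refine h2.trans ?_
    rw [inv_mul_le_iff₀ hp, mul_one]
    have := L2_le_sob m ⇑u
    calc L2norm Set.univ ⇑u * √V ≤ √V * √V := by gcongr; linarith
      _ = V := Real.mul_self_sqrt hp.le
  have h3 := abs_sub_abs_le_abs_sub (⨍ z in pCube z₀ 2, u z) (⨍ z in pCube z₀ (2 ^ k * 2), u z)
  have hA : (1 : ℝ) ≤ 2 ^ (n + 2) := one_le_pow₀ (by norm_num)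
  generalize (2 : ℝ) ^ (n + 2) = A at *
  have h4 : (k : ℝ) * (A * B) ≤ (2 * logPlus W + 1) * (A * B) := by gcongr
  have h5 : 0 ≤ A * B := by positivity
  have h6 : 2 * A * (1 + B * (1 + logPlus W)) =
      2 * A + (A * B) + (2 * logPlus W + 1) * (A * B) := by ring
  linarith

end
end

section
/- Let T > 0, let Ω_T = (0,1) × (0,T) and Ω̃_T = (−1,2) × (−T,2T), let u be continuous on [0,1] × [0,T] with finite parabolic BMO norm on Ω_T, and let ũ be the reflection extension of u. Set r₀ = min(1/2, (T/2)^{1/2}), r₁ = r₀/2 and r₂ = r₁/√2. Then there exists a universal constant C > 0 (independent of T and u) such that for every parabolic cube Q_r ⊆ Ω̃_T of radius r ≤ r₂, inf_{c ∈ ℝ} (1/|Q_r|) ∫_{Q_r} |ũ − c| ≤ C ‖u‖_{BMOₚ(Ω_T)}. -/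
open MeasureTheory Real
open scoped ENNReal

noncomputable section

/-- The parabolic distance `‖z‖ₚ = max |x| √|t|` from `z = (x,t) ∈ ℝ²` to the origin. -/
def pnorm2 (z : ℝ × ℝ) : ℝ := max |z.1| (Real.sqrt |z.2|)

/-- The parabolic cube of radius `r` centered at `z₀` in `ℝ²`. -/
def pCube2 (z₀ : ℝ × ℝ) (r : ℝ) : Set (ℝ × ℝ) := {z | pnorm2 (z - z₀) < r}

/-- The set of mean oscillations `⨍_Q |u - u_Q|` of `u` over parabolic cubes `Q ⊆ O`. -/
def oscSet2 (O : Set (ℝ × ℝ)) (u : ℝ × ℝ → ℝ) : Set ℝ :=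
  {v | ∃ z₀ r, 0 < r ∧ pCube2 z₀ r ⊆ O ∧
    v = ⨍ z in pCube2 z₀ r, |u z - ⨍ w in pCube2 z₀ r, u w|}

/-- The parabolic BMO norm of `u` over `O ⊆ ℝ²`. -/
def pBMO2 (O : Set (ℝ × ℝ)) (u : ℝ × ℝ → ℝ) : ℝ := sSup (oscSet2 O u)

/-- The domain `Ω_T = (0,1) × (0,T)`. -/
def Omega (T : ℝ) : Set (ℝ × ℝ) := Set.Ioo (0 : ℝ) 1 ×ˢ Set.Ioo (0 : ℝ) T

/-- The domain `Ω̂_T = (-1,2) × (0,T)`. -/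
def OmegaHat (T : ℝ) : Set (ℝ × ℝ) := Set.Ioo (-1 : ℝ) 2 ×ˢ Set.Ioo (0 : ℝ) T

/-- The domain `Ω̃_T = (-1,2) × (-T,2T)`. -/
def OmegaTilde (T : ℝ) : Set (ℝ × ℝ) := Set.Ioo (-1 : ℝ) 2 ×ˢ Set.Ioo (-T) (2 * T)

/-- The spatial reflection extension of `u` from `[0,1]` to `(-1,2)` (in the `x` variable). -/
def extSpace (u : ℝ × ℝ → ℝ) : ℝ × ℝ → ℝ := fun p =>
  if p.1 < 0 then -3 * u (-p.1, p.2) + 4 * u (-p.1 / 2, p.2)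
  else if 1 < p.1 then -3 * u (2 - p.1, p.2) + 4 * u ((3 - p.1) / 2, p.2)
  else u p

/-- The temporal reflection extension from `[0,T]` to `(-T,2T)` (in the `t` variable). -/
def extTime (T : ℝ) (v : ℝ × ℝ → ℝ) : ℝ × ℝ → ℝ := fun p =>
  if p.2 < 0 then v (p.1, -p.2)
  else if T < p.2 then v (p.1, 2 * T - p.2)
  else v p

/-- The reflection extension `ũ` of `u` from `Ω_T` to `Ω̃_T = (-1,2) × (-T,2T)`. -/
def uext (T : ℝ) (u : ℝ × ℝ → ℝ) : ℝ × ℝ → ℝ := extTime T (extSpace u)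

/-- The reflection extension `ũ`, extended by `0` outside `Ω̃_T`. -/
def uextZ (T : ℝ) (u : ℝ × ℝ → ℝ) : ℝ × ℝ → ℝ :=
  (OmegaTilde T).indicator (uext T u)

/-- The partial derivative `u_x`. -/
def Dx2 (u : ℝ × ℝ → ℝ) : ℝ × ℝ → ℝ := fun p => fderiv ℝ u p (1, 0)

/-- The partial derivative `u_t`. -/
def Dt2 (u : ℝ × ℝ → ℝ) : ℝ × ℝ → ℝ := fun p => fderiv ℝ u p (0, 1)

/-- The `L²(O)` norm. -/
def L2norm2 (O : Set (ℝ × ℝ)) (v : ℝ × ℝ → ℝ) : ℝ :=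
  (eLpNorm v 2 (volume.restrict O)).toReal

/-- The parabolic Sobolev norm
`‖u‖_{W₂^{2,1}(O)} = ‖u‖_{L²} + ‖u_x‖_{L²} + ‖u_{xx}‖_{L²} + ‖u_t‖_{L²}`. -/
def W21norm (O : Set (ℝ × ℝ)) (u : ℝ × ℝ → ℝ) : ℝ :=
  L2norm2 O u + L2norm2 O (Dx2 u) + L2norm2 O (Dx2 (Dx2 u)) + L2norm2 O (Dt2 u)

/-- Generic folding map of the line onto `[0,L]`. -/
def foldMap (L k x : ℝ) : ℝ :=
  if x < 0 then -x / k else if L < x then L - (x - L) / k else x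

theorem foldMap_measurable (L k : ℝ) : Measurable (foldMap L k) := by
  unfold foldMap
  refine Measurable.ite measurableSet_Iio (by fun_prop) ?_
  exact Measurable.ite measurableSet_Ioi (by fun_prop) measurable_id

theorem lintegral_affine (h : ℝ → ℝ≥0∞) (hh : Measurable h) (a b : ℝ) (ha : a ≠ 0) :
    ∫⁻ x, h (b + a * x) = ENNReal.ofReal |a⁻¹| * ∫⁻ x, h x := by
  have h1 := Real.map_volume_mul_left ha
  have h2 : Measurable (fun y => h (b + y)) := by fun_prop
  rw [← lintegral_add_left_eq_self h b, ← smul_eq_mul, ← lintegral_smul_measure, ← h1,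
    lintegral_map h2 (by fun_prop)]

theorem lintegral_fold (h : ℝ → ℝ≥0∞) (hh : Measurable h) (L k : ℝ) (hk : 1 ≤ k) :
    ∫⁻ x, h (foldMap L k x) ≤ ENNReal.ofReal (1 + 2 * k) * ∫⁻ x, h x := by
  have hk0 : 0 < k := by linarith
  have hne : -k⁻¹ ≠ 0 := by simpa using hk0.ne'
  have e1 := lintegral_affine h hh (-k⁻¹) 0 hne
  have e2 := lintegral_affine h hh (-k⁻¹) (L + L / k) hne
  have ek : |(-k⁻¹)⁻¹| = k := by rw [inv_neg, inv_inv, abs_neg, abs_of_pos hk0]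
  rw [ek] at e1 e2
  calc ∫⁻ x, h (foldMap L k x)
      ≤ ∫⁻ x, (h x + (h (0 + -k⁻¹ * x) + h (L + L / k + -k⁻¹ * x))) := by
        refine lintegral_mono fun x => ?_
        unfold foldMap
        split_ifs
        · have : -x / k = 0 + -k⁻¹ * x := by field_simp; ring
          rw [this]
          exact le_add_left (le_add_right le_rfl)
        · have : L - (x - L) / k = L + L / k + -k⁻¹ * x := by field_simp; ring
          rw [this]
          exact le_add_left (le_add_left le_rfl)
        · exact le_add_right le_rfl
    _ = ENNReal.ofReal (1 + 2 * k) * ∫⁻ x, h x := by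
        rw [lintegral_add_left hh, lintegral_add_left (by fun_prop), e1, e2,
          show 1 + 2 * k = 1 + (k + k) by ring, ENNReal.ofReal_add (by norm_num) (by linarith),
          ENNReal.ofReal_add hk0.le hk0.le, ENNReal.ofReal_one]
        ring

theorem lintegral_fold2 (G : ℝ × ℝ → ℝ≥0∞) (hG : Measurable G) (T k : ℝ) (hk : 1 ≤ k) :
    ∫⁻ p : ℝ × ℝ, G (foldMap 1 k p.1, foldMap T 1 p.2)
      ≤ ENNReal.ofReal (3 * (1 + 2 * k)) * ∫⁻ p, G p := by
  have m1 := foldMap_measurable 1 k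
  have m2 := foldMap_measurable T 1
  have hm : Measurable (fun p : ℝ × ℝ => G (foldMap 1 k p.1, foldMap T 1 p.2)) := by fun_prop
  rw [Measure.volume_eq_prod, lintegral_prod _ hm.aemeasurable, lintegral_prod _ hG.aemeasurable]
  have hI : Measurable (fun x => ∫⁻ y, G (x, y)) := hG.lintegral_prod_right'
  calc ∫⁻ x, ∫⁻ y, G (foldMap 1 k x, foldMap T 1 y)
      ≤ ∫⁻ x, ENNReal.ofReal (1 + 2 * 1) * ∫⁻ y, G (foldMap 1 k x, y) :=
        lintegral_mono fun x =>
          lintegral_fold (fun y => G (foldMap 1 k x, y)) (by fun_prop) T 1 le_rfl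
    _ = ENNReal.ofReal (1 + 2 * 1) * ∫⁻ x, ∫⁻ y, G (foldMap 1 k x, y) :=
        lintegral_const_mul _ (hI.comp m1)
    _ ≤ ENNReal.ofReal (1 + 2 * 1) * (ENNReal.ofReal (1 + 2 * k) * ∫⁻ x, ∫⁻ y, G (x, y)) := by
        gcongr
        exact lintegral_fold _ hI 1 k hk
    _ = _ := by
        rw [← mul_assoc, ← ENNReal.ofReal_mul (by norm_num)]
        norm_num

theorem foldMap_mem {L k x : ℝ} (hL : 0 < L) (hk : 1 ≤ k) (h1 : -L < x) (h2 : x < 2 * L) :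
    0 ≤ foldMap L k x ∧ foldMap L k x ≤ L := by
  have hk0 : 0 < k := by linarith
  unfold foldMap
  split_ifs
  · constructor
    · apply div_nonneg <;> linarith
    · rw [div_le_iff₀ hk0]; nlinarith
  · constructor
    · have : (x - L) / k ≤ L := by rw [div_le_iff₀ hk0]; nlinarith
      linarith
    · have : 0 ≤ (x - L) / k := by apply div_nonneg <;> linarith
      linarith
  · constructor <;> linarith

theorem foldMap_lip {L k x y : ℝ} (hL : 0 < L) (hk : 1 ≤ k) :
    |foldMap L k x - foldMap L k y| ≤ |x - y| := by
  have hk0 : 0 < k := by linarith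
  wlog hxy : x ≤ y generalizing x y
  · rw [abs_sub_comm, abs_sub_comm x y]; exact this (le_of_not_ge hxy)
  have key : ∀ d : ℝ, 0 ≤ d → 0 ≤ d / k ∧ d / k ≤ d := fun d hd =>
    ⟨div_nonneg hd hk0.le, div_le_self hd hk⟩
  rw [abs_sub_comm x y, abs_of_nonneg (by linarith : 0 ≤ y - x), abs_le]
  unfold foldMap
  split_ifs
  · have := key (y - x) (by linarith)
    rw [← sub_div]
    rw [show -x - -y = y - x by ring]
    constructor <;> linarith
  · have := key (-x) (by linarith)
    have := key (y - L) (by linarith)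
    constructor <;> linarith
  · have := key (-x) (by linarith)
    constructor <;> linarith
  · linarith
  · have := key (y - x) (by linarith)
    have e : L - (x - L) / k - (L - (y - L) / k) = (y - x) / k := by ring
    rw [e]
    constructor <;> linarith
  · linarith
  · linarith
  · have := key (y - L) (by linarith)
    constructor <;> linarith
  · constructor <;> linarith

theorem fold_box {L k x₀ ρ : ℝ} (hL : 0 < L) (hk : 1 ≤ k) (hρL : 2 * ρ ≤ L)
    (hsub : ∀ x, |x - x₀| < ρ → -L < x ∧ x < 2 * L) :
    ∃ a, 0 ≤ a ∧ a + 2 * ρ ≤ L ∧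
      ∀ x, |x - x₀| < ρ → foldMap L k x ∈ Set.Icc a (a + 2 * ρ) := by
  refine ⟨min (max (foldMap L k x₀ - ρ) 0) (L - 2 * ρ), ?_, ?_, ?_⟩
  · exact le_min (le_max_right _ _) (by linarith)
  · have := min_le_right (max (foldMap L k x₀ - ρ) 0) (L - 2 * ρ)
    linarith
  · intro x hx
    have hm := foldMap_mem hL hk (hsub x hx).1 (hsub x hx).2
    have hl := abs_le.1 ((foldMap_lip (x := x) (y := x₀) hL hk).trans hx.le)
    constructor
    · exact (min_le_left _ _).trans (max_le (by linarith) hm.1)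
    · rw [← sub_le_iff_le_add]
      refine le_min (le_trans ?_ (le_max_left _ _)) ?_ <;> linarith

theorem pCube2_eq (z : ℝ × ℝ) {r : ℝ} (hr : 0 < r) :
    pCube2 z r = Set.Ioo (z.1 - r) (z.1 + r) ×ˢ Set.Ioo (z.2 - r ^ 2) (z.2 + r ^ 2) := by
  ext p
  simp only [pCube2, pnorm2, Set.mem_ofPred_eq, max_lt_iff, Real.sqrt_lt' hr, abs_lt,
    Set.mem_prod, Set.mem_Ioo, Prod.fst_sub, Prod.snd_sub]
  constructor
  · rintro ⟨⟨_, _⟩, _, _⟩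
    refine ⟨⟨?_, ?_⟩, ?_, ?_⟩ <;> linarith
  · rintro ⟨⟨_, _⟩, _, _⟩
    refine ⟨⟨?_, ?_⟩, ?_, ?_⟩ <;> linarith

theorem vol_pCube2 (z : ℝ × ℝ) {r : ℝ} (hr : 0 < r) :
    volume.real (pCube2 z r) = 4 * r ^ 3 := by
  rw [pCube2_eq z hr, Measure.real, Measure.volume_eq_prod, Measure.prod_prod, Real.volume_Ioo,
    Real.volume_Ioo, ← ENNReal.ofReal_mul (by linarith), ENNReal.toReal_ofReal]
  · ring
  · ring_nf; positivity

theorem uext_eq (T : ℝ) (u : ℝ × ℝ → ℝ) (p : ℝ × ℝ) :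
    uext T u p = -3 * u (foldMap 1 1 p.1, foldMap T 1 p.2)
      + 4 * u (foldMap 1 2 p.1, foldMap T 1 p.2) := by
  obtain ⟨x, t⟩ := p
  have ht : uext T u (x, t) = extSpace u (x, foldMap T 1 t) := by
    simp only [uext, extTime, foldMap]
    split_ifs
    · simp
    · congr 2; ring
    · rfl
  rw [ht]
  simp only [extSpace]
  generalize foldMap T 1 t = s
  unfold foldMap
  split_ifs
  · simp
  · congr 4 <;> ring
  · ring

/-- Key estimate for one folding map. -/
theorem key_fold (T : ℝ) (hT : 0 < T) (u : ℝ × ℝ → ℝ)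
    (hu : ContinuousOn u (Set.Icc (0 : ℝ) 1 ×ˢ Set.Icc (0 : ℝ) T))
    (hb : BddAbove (oscSet2 (Omega T) u)) (z : ℝ × ℝ) (r : ℝ) (hr : 0 < r)
    (hr1 : 2 * r ≤ 1) (hr2 : 2 * r ^ 2 ≤ T) (hQ : pCube2 z r ⊆ OmegaTilde T)
    (k : ℝ) (hk : 1 ≤ k) :
    ∃ (c : ℝ) (F : ℝ × ℝ → ℝ≥0∞), Measurable F ∧
      (∀ p ∈ pCube2 z r, ‖u (foldMap 1 k p.1, foldMap T 1 p.2) - c‖ₑ ≤ F p) ∧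
      ∫⁻ p, F p ≤ ENNReal.ofReal (3 * (1 + 2 * k) * (4 * r ^ 3 * pBMO2 (Omega T) u)) := by
  have hr0 : 0 < r ^ 2 := by positivity
  have hQ' := hQ
  rw [pCube2_eq z hr] at hQ'
  have hsx : ∀ x, |x - z.1| < r → -1 < x ∧ x < 2 * 1 := by
    intro x hx
    rw [abs_lt] at hx
    have : (x, z.2) ∈ OmegaTilde T := hQ' ⟨⟨by simp; linarith, by simp; linarith⟩,
      ⟨by simp; linarith, by simp; linarith⟩⟩
    have h := this.1
    simpa using h
  have hst : ∀ t, |t - z.2| < r ^ 2 → -T < t ∧ t < 2 * T := by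
    intro t ht
    rw [abs_lt] at ht
    have : (z.1, t) ∈ OmegaTilde T := hQ' ⟨⟨by simp; linarith, by simp; linarith⟩,
      ⟨by simp; linarith, by simp; linarith⟩⟩
    exact this.2
  obtain ⟨a, ha0, ha1, hax⟩ := fold_box one_pos hk hr1 hsx
  obtain ⟨b, hb0, hb1, hbt⟩ := fold_box hT le_rfl hr2 hst
  set B : Set (ℝ × ℝ) := Set.Icc a (a + 2 * r) ×ˢ Set.Icc b (b + 2 * r ^ 2) with hB
  have hBsub : B ⊆ Set.Icc (0 : ℝ) 1 ×ˢ Set.Icc (0 : ℝ) T :=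
    Set.prod_mono (Set.Icc_subset_Icc ha0 ha1) (Set.Icc_subset_Icc hb0 hb1)
  have hBm : MeasurableSet B := measurableSet_Icc.prod measurableSet_Icc
  have huB := hu.mono hBsub
  set w : ℝ × ℝ := (a + r, b + r ^ 2) with hw
  have hcube : pCube2 w r = Set.Ioo a (a + 2 * r) ×ˢ Set.Ioo b (b + 2 * r ^ 2) := by
    rw [pCube2_eq w hr]
    simp only [hw]
    congr 2 <;> ring
  have hres : (volume.restrict B : Measure (ℝ × ℝ)) = volume.restrict (pCube2 w r) := by
    rw [hcube, hB, Measure.volume_eq_prod, ← Measure.prod_restrict, ← Measure.prod_restrict,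
      Measure.restrict_congr_set Ioo_ae_eq_Icc, Measure.restrict_congr_set Ioo_ae_eq_Icc]
  set c : ℝ := ⨍ p in pCube2 w r, u p with hc
  have hmem : (⨍ p in pCube2 w r, |u p - c|) ∈ oscSet2 (Omega T) u := by
    refine ⟨w, r, hr, ?_, rfl⟩
    rw [hcube]
    exact Set.prod_mono (Set.Ioo_subset_Ioo ha0 ha1) (Set.Ioo_subset_Ioo hb0 hb1)
  have hle : (⨍ p in pCube2 w r, |u p - c|) ≤ pBMO2 (Omega T) u := le_csSup hb hmem
  have hint : IntegrableOn (fun p => u p - c) B :=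
    (huB.sub continuousOn_const).integrableOn_compact (isCompact_Icc.prod isCompact_Icc)
  have hBint : ∫⁻ p in B, ‖u p - c‖ₑ ≤ ENNReal.ofReal (4 * r ^ 3 * pBMO2 (Omega T) u) := by
    rw [← ofReal_integral_norm_eq_lintegral_enorm hint, hres]
    apply ENNReal.ofReal_le_ofReal
    rw [setAverage_eq, vol_pCube2 w hr, smul_eq_mul, inv_mul_le_iff₀ (by positivity)] at hle
    simpa [Real.norm_eq_abs] using hle
  classical
  set G : ℝ × ℝ → ℝ≥0∞ := B.piecewise (fun p => ‖u p - c‖ₑ) (fun _ => 0) with hG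
  have hGm : Measurable G :=
    ContinuousOn.measurable_piecewise (huB.sub continuousOn_const).enorm continuousOn_const hBm
  have hGint : ∫⁻ p, G p = ∫⁻ p in B, ‖u p - c‖ₑ := by
    rw [← lintegral_indicator hBm]
    congr 1
    ext p
    simp only [hG, Set.piecewise, Set.indicator]
  have m1 := foldMap_measurable 1 k
  have m2 := foldMap_measurable T 1
  refine ⟨c, fun p => G (foldMap 1 k p.1, foldMap T 1 p.2), by fun_prop, ?_, ?_⟩
  · intro p hp
    rw [pCube2_eq z hr] at hp
    obtain ⟨⟨h1, h2⟩, h3, h4⟩ := hp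
    have hin : (foldMap 1 k p.1, foldMap T 1 p.2) ∈ B :=
      ⟨hax _ (abs_lt.2 ⟨by linarith, by linarith⟩), hbt _ (abs_lt.2 ⟨by linarith, by linarith⟩)⟩
    simp only [hG]
    rw [Set.piecewise_eq_of_mem _ _ _ hin]
  · calc ∫⁻ p : ℝ × ℝ, G (foldMap 1 k p.1, foldMap T 1 p.2)
        ≤ ENNReal.ofReal (3 * (1 + 2 * k)) * ∫⁻ p, G p := lintegral_fold2 G hGm T k hk
      _ ≤ ENNReal.ofReal (3 * (1 + 2 * k)) * ENNReal.ofReal (4 * r ^ 3 * pBMO2 (Omega T) u) := by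
          rw [hGint]; gcongr
      _ = _ := by rw [← ENNReal.ofReal_mul (by linarith)]

/-- **Estimates on small parabolic cubes in `Ω̃_T = (-1,2) × (-T,2T)`** (Lemma 3.5): for
every parabolic cube `Q_r ⊆ Ω̃_T` with `r ≤ r₂ = r₁/√2`, `r₁ = r₀/2`,
`r₀ = min(1/2, √(T/2))`, `inf_c ⨍_{Q_r} |ũ - c| ≤ C ‖u‖_{BMOₚ(Ω_T)}` with `C` universal. -/
theorem small_cube_estimate_tilde : ∃ C : ℝ, 0 < C ∧ ∀ T : ℝ, 0 < T →
    ∀ u : ℝ × ℝ → ℝ, ContinuousOn u (Set.Icc (0 : ℝ) 1 ×ˢ Set.Icc (0 : ℝ) T) →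
      BddAbove (oscSet2 (Omega T) u) →
      ∀ (z₀ : ℝ × ℝ) (r : ℝ), 0 < r →
        r ≤ (min (1 / 2) (Real.sqrt (T / 2)) / 2) / Real.sqrt 2 →
        pCube2 z₀ r ⊆ OmegaTilde T →
        (⨅ c : ℝ, ⨍ p in pCube2 z₀ r, |uext T u p - c|) ≤ C * pBMO2 (Omega T) u := by
  refine ⟨87, by norm_num, ?_⟩
  intro T hT u hu hb z r hr hrle hQ
  have hs2 : 1 ≤ Real.sqrt 2 := Real.one_le_sqrt.2 (by norm_num)
  have hr' : r ≤ min (1 / 2) (Real.sqrt (T / 2)) / 2 :=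
    hrle.trans (div_le_self (by positivity) hs2)
  have hm1 := min_le_left (1 / 2) (Real.sqrt (T / 2))
  have hm2 := min_le_right (1 / 2) (Real.sqrt (T / 2))
  have hr1 : 2 * r ≤ 1 := by linarith
  have hr2 : 2 * r ^ 2 ≤ T := by
    have h1 : r ≤ Real.sqrt (T / 2) := by linarith
    have h2 := Real.le_sqrt' hr |>.1 h1
    linarith
  obtain ⟨c₁, F₁, hF₁, hb₁, h1⟩ := key_fold T hT u hu hb z r hr hr1 hr2 hQ 1 le_rfl
  obtain ⟨c₂, F₂, hF₂, hb₂, h2⟩ := key_fold T hT u hu hb z r hr hr1 hr2 hQ 2 (by norm_num)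
  set M := pBMO2 (Omega T) u with hM
  have hM0 : 0 ≤ M := by
    refine Real.sSup_nonneg fun v hv => ?_
    obtain ⟨w, s, -, -, rfl⟩ := hv
    rw [setAverage_eq, smul_eq_mul]
    exact mul_nonneg (by positivity) (integral_nonneg fun _ => abs_nonneg _)
  have hbb : BddBelow (Set.range fun c : ℝ => ⨍ p in pCube2 z r, |uext T u p - c|) := by
    refine ⟨0, ?_⟩
    rintro _ ⟨c, rfl⟩
    simp only
    rw [setAverage_eq, smul_eq_mul]
    exact mul_nonneg (by positivity) (integral_nonneg fun _ => abs_nonneg _)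
  refine (ciInf_le hbb (-3 * c₁ + 4 * c₂)).trans ?_
  rw [setAverage_eq, vol_pCube2 z hr, smul_eq_mul, inv_mul_le_iff₀ (by positivity)]
  have hpow : 0 ≤ 4 * r ^ 3 * M := by positivity
  have hQm : MeasurableSet (pCube2 z r) := by
    rw [pCube2_eq z hr]; exact measurableSet_Ioo.prod measurableSet_Ioo
  have hfin : ENNReal.ofReal (∫ p in pCube2 z r, |uext T u p - (-3 * c₁ + 4 * c₂)|)
      ≤ ENNReal.ofReal (4 * r ^ 3 * (87 * M)) := by
    calc ENNReal.ofReal (∫ p in pCube2 z r, |uext T u p - (-3 * c₁ + 4 * c₂)|)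
        = ‖∫ p in pCube2 z r, |uext T u p - (-3 * c₁ + 4 * c₂)|‖ₑ :=
          (Real.enorm_of_nonneg (integral_nonneg fun _ => abs_nonneg _)).symm
      _ ≤ ∫⁻ p in pCube2 z r, ‖|uext T u p - (-3 * c₁ + 4 * c₂)|‖ₑ :=
          enorm_integral_le_lintegral_enorm _
      _ ≤ ∫⁻ p in pCube2 z r, (3 * F₁ p + 4 * F₂ p) := by
          refine setLIntegral_mono (by fun_prop) fun p hp => ?_
          have e3 : ‖(-3 : ℝ)‖ₑ = 3 := by
            rw [enorm_neg, Real.enorm_of_nonneg (by norm_num)]; simp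
          have e4 : ‖(4 : ℝ)‖ₑ = 4 := by
            rw [Real.enorm_of_nonneg (by norm_num)]; simp
          rw [Real.enorm_abs, uext_eq]
          set A := u (foldMap 1 1 p.1, foldMap T 1 p.2) with hA
          set D := u (foldMap 1 2 p.1, foldMap T 1 p.2) with hD
          have : -3 * A + 4 * D - (-3 * c₁ + 4 * c₂) = -3 * (A - c₁) + 4 * (D - c₂) := by ring
          rw [this]
          refine (enorm_add_le _ _).trans ?_
          rw [enorm_mul, enorm_mul, e3, e4]
          gcongr
          · exact hb₁ p hp
          · exact hb₂ p hp
      _ ≤ ∫⁻ p, (3 * F₁ p + 4 * F₂ p) := setLIntegral_le_lintegral _ _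
      _ = 3 * (∫⁻ p, F₁ p) + 4 * (∫⁻ p, F₂ p) := by
          rw [lintegral_add_left (by fun_prop), lintegral_const_mul _ hF₁,
            lintegral_const_mul _ hF₂]
      _ ≤ 3 * ENNReal.ofReal (3 * (1 + 2 * 1) * (4 * r ^ 3 * M))
          + 4 * ENNReal.ofReal (3 * (1 + 2 * 2) * (4 * r ^ 3 * M)) := by gcongr
      _ = ENNReal.ofReal (4 * r ^ 3 * (87 * M)) := by
          rw [show (3 : ℝ≥0∞) = ENNReal.ofReal 3 by simp,
            show (4 : ℝ≥0∞) = ENNReal.ofReal 4 by simp, ← ENNReal.ofReal_mul (by norm_num),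
            ← ENNReal.ofReal_mul (by norm_num), ← ENNReal.ofReal_add (by positivity)
            (by positivity)]
          congr 1
          ring
  exact (ENNReal.ofReal_le_ofReal_iff (by positivity)).1 hfin

end
end
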